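/- There exists a constant C > 0 such that for every x ∈ (0,1) and every y > min(2, 3x/2) one has |T₁(x,y)| ≤ C·x/y³. -/

import Mathlib

open MeasureTheory Real Set

/-- `T₁(x,y) = (y/x)·(1/sinh|x²−y²| − 1/|x²−y²| − 1/sinh(x²+y²) + 1/(x²+y²))`. -/
noncomputable def T1 (x y : ℝ) : ℝ :=
  (y / x) * (1 / Real.sinh |x ^ 2 - y ^ 2| - 1 / |x ^ 2 - y ^ 2|
    - 1 / Real.sinh (x ^ 2 + y ^ 2) + 1 / (x ^ 2 + y ^ 2))

theorem sq_div_four_le_sinh {a : ℝ} (ha : 0 ≤ a) : a ^ 2 / 4 ≤ Real.sinh a := by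
  have h1 := Real.quadratic_le_exp_of_nonneg ha
  have h2 : Real.exp (-a) ≤ 1 := Real.exp_le_one_iff.2 (by linarith)
  rw [Real.sinh_eq]
  linarith

theorem sinh_sub_sinh_le {a b : ℝ} (ha : 0 ≤ a) (hab : a ≤ b) :
    Real.sinh b - Real.sinh a ≤ (b - a) * (Real.sinh b + 1) := by
  have exp_sub_le (s t : ℝ) : Real.exp t - Real.exp s ≤ (t - s) * Real.exp t := by
    have h := mul_le_mul_of_nonneg_left (Real.add_one_le_exp (s - t)) (Real.exp_pos t).le
    rw [← Real.exp_add, add_sub_cancel] at h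
    linarith
  have h1 := exp_sub_le a b
  have h2 := exp_sub_le (-b) (-a)
  have ha1 : Real.exp (-a) ≤ 1 := Real.exp_le_one_iff.2 (by linarith)
  have hb1 : Real.exp (-b) ≤ 1 := Real.exp_le_one_iff.2 (by linarith)
  have h3 := mul_le_mul_of_nonneg_left ha1 (sub_nonneg.2 hab)
  have h4 := mul_le_mul_of_nonneg_left hb1 (sub_nonneg.2 hab)
  rw [Real.sinh_eq, Real.sinh_eq]
  linarith

/-- The function `u ↦ 1 / sinh u - 1 / u` is Lipschitz on `[a, ∞)` with constant `5 / a ^ 2`. -/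
theorem abs_inv_sinh_sub_inv_sub_le {a b : ℝ} (ha : 0 < a) (hab : a ≤ b) :
    |1 / Real.sinh a - 1 / a - 1 / Real.sinh b + 1 / b| ≤ 5 * (b - a) / a ^ 2 := by
  have hb : 0 < b := ha.trans_le hab
  have hsa : a ≤ Real.sinh a := Real.self_le_sinh_iff.2 ha.le
  have hsab : Real.sinh a ≤ Real.sinh b := Real.sinh_le_sinh.2 hab
  have hsa0 : 0 < Real.sinh a := ha.trans_le hsa
  have hsb0 : 0 < Real.sinh b := hsa0.trans_le hsab
  have hd : 0 ≤ b - a := sub_nonneg.2 hab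
  have hinv : 1 / a - 1 / b ≤ (b - a) / a ^ 2 := by
    rw [div_sub_div _ _ ha.ne' hb.ne', one_mul, mul_one]
    gcongr
    nlinarith
  have hinv_sinh : 1 / Real.sinh a - 1 / Real.sinh b ≤ 5 * (b - a) / a ^ 2 := calc
    1 / Real.sinh a - 1 / Real.sinh b
        = (Real.sinh b - Real.sinh a) / (Real.sinh a * Real.sinh b) := by field_simp
    _ ≤ (b - a) * (Real.sinh b + 1) / (Real.sinh a * Real.sinh b) := by
        gcongr
        exact sinh_sub_sinh_le ha.le hab
    _ = (b - a) / Real.sinh a + (b - a) / (Real.sinh a * Real.sinh b) := by field_simp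
    _ ≤ (b - a) / (a ^ 2 / 4) + (b - a) / (a * a) := by
        gcongr
        · exact sq_div_four_le_sinh ha.le
        · exact hsa.trans hsab
    _ = 5 * (b - a) / a ^ 2 := by field_simp; ring
  have h1 : 1 / b ≤ 1 / a := one_div_le_one_div_of_le ha hab
  have h2 : 1 / Real.sinh b ≤ 1 / Real.sinh a := one_div_le_one_div_of_le hsa0 hsab
  have h3 : 0 ≤ (b - a) / a ^ 2 := by positivity
  rw [mul_div_assoc] at hinv_sinh ⊢
  rw [abs_le]
  constructor <;> linarith

theorem T1_bound_far :
    ∃ C : ℝ, 0 < C ∧ ∀ x y : ℝ, x ∈ Set.Ioo (0 : ℝ) 1 → min 2 (3 * x / 2) < y →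
      |T1 x y| ≤ C * x / y ^ 3 := by
  refine ⟨40, by norm_num, fun x y ⟨hx0, hx1⟩ hy => ?_⟩
  rw [min_eq_right (by linarith)] at hy
  have hy0 : 0 < y := by linarith
  have hgap : y ^ 2 / 2 ≤ y ^ 2 - x ^ 2 := by nlinarith
  have ha : 0 < y ^ 2 - x ^ 2 := lt_of_lt_of_le (by positivity) hgap
  have habs : |x ^ 2 - y ^ 2| = y ^ 2 - x ^ 2 := by rw [abs_sub_comm, abs_of_pos ha]
  have hdiff := abs_inv_sinh_sub_inv_sub_le ha (b := x ^ 2 + y ^ 2) (by nlinarith)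
  rw [T1, habs, abs_mul, abs_of_pos (div_pos hy0 hx0)]
  calc _ ≤ y / x * (5 * (x ^ 2 + y ^ 2 - (y ^ 2 - x ^ 2)) / (y ^ 2 - x ^ 2) ^ 2) := by gcongr
    _ = y / x * (10 * x ^ 2 / (y ^ 2 - x ^ 2) ^ 2) := by ring
    _ ≤ y / x * (10 * x ^ 2 / (y ^ 2 / 2) ^ 2) := by gcongr
    _ = 40 * x / y ^ 3 := by field_simp; ring
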